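/- Let H be a Hopf algebra over a field k, suppose r ∈ H satisfies the 1-dimensional partial comodule equations, and let g ∈ H be a grouplike element, i.e. Δ(g) = g ⊗ g and ε(g) = 1. Then the element g·r also satisfies the 1-dimensional partial comodule equations. -/

import Mathlib

open TensorProduct

/-- The five 1-dimensional partial comodule equations for an element `r` of a Hopf
algebra `H`: `ε(r) = 1`; `r ⊗ r·S(r) = r₍₁₎ ⊗ r₍₂₎·S(r)`; `r·S(r₍₁₎) ⊗ r₍₂₎ = r·S(r) ⊗ r`;
`r ⊗ S(r)·r = r₍₁₎ ⊗ S(r₍₂₎)·r`; `S(r)·r ⊗ r = S(r)·r₍₁₎ ⊗ r₍₂₎`. -/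
def OneDimPCM (k : Type*) {H : Type*} [Field k] [Ring H] [HopfAlgebra k H] (r : H) : Prop :=
  Coalgebra.counit (R := k) r = 1
  ∧ r ⊗ₜ[k] (r * HopfAlgebra.antipode (R := k) r)
      = Coalgebra.comul (R := k) r * ((1 : H) ⊗ₜ[k] HopfAlgebra.antipode (R := k) r)
  ∧ (r ⊗ₜ[k] (1 : H)) *
        (LinearMap.rTensor H (HopfAlgebra.antipode (R := k)) (Coalgebra.comul (R := k) r))
      = (r * HopfAlgebra.antipode (R := k) r) ⊗ₜ[k] r
  ∧ r ⊗ₜ[k] (HopfAlgebra.antipode (R := k) r * r)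
      = (LinearMap.lTensor H (HopfAlgebra.antipode (R := k)) (Coalgebra.comul (R := k) r))
          * ((1 : H) ⊗ₜ[k] r)
  ∧ (HopfAlgebra.antipode (R := k) r * r) ⊗ₜ[k] r
      = ((HopfAlgebra.antipode (R := k) r) ⊗ₜ[k] (1 : H)) * Coalgebra.comul (R := k) r

/-- if `r ∈ H` satisfies the 1-dimensional partial comodule equations and
`g ∈ H` is grouplike (`Δ(g) = g ⊗ g`, `ε(g) = 1`), then `g·r` also satisfies them. -/
theorem stmt9 (k H : Type*) [Field k] [Ring H] [HopfAlgebra k H]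
    (r : H) (hr : OneDimPCM k r)
    (g : H) (hg1 : Coalgebra.comul (R := k) g = g ⊗ₜ[k] g)
    (hg2 : Coalgebra.counit (R := k) g = 1) :
    OneDimPCM k (g * r) := by
  obtain ⟨h1, h2, h3, h4, h5⟩ := hr
  have hsg : HopfAlgebra.antipode k g * g = 1 := by
    have := HopfAlgebra.mul_antipode_rTensor_comul_apply (R := k) g
    simpa [hg1, hg2] using this
  have hS : HopfAlgebra.antipode k (g * r)
      = HopfAlgebra.antipode k r * HopfAlgebra.antipode k g :=
    HopfAlgebra.antipode_mul_antidistrib g r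
  have hD : Coalgebra.comul (R := k) (g * r) = (g ⊗ₜ[k] g) * Coalgebra.comul (R := k) r := by
    rw [Bialgebra.comul_mul, hg1]
  have hR : ∀ x : H ⊗[k] H, LinearMap.rTensor H (HopfAlgebra.antipode k) ((g ⊗ₜ[k] g) * x)
      = ((1 : H) ⊗ₜ[k] g) * LinearMap.rTensor H (HopfAlgebra.antipode k) x
        * (HopfAlgebra.antipode k g ⊗ₜ[k] (1 : H)) := by
    intro x
    induction x with
    | zero => simp
    | tmul a b => simp [HopfAlgebra.antipode_mul_antidistrib]
    | add a b ha hb => simp only [mul_add, map_add, add_mul, ha, hb]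
  have hL : ∀ x : H ⊗[k] H, LinearMap.lTensor H (HopfAlgebra.antipode k) ((g ⊗ₜ[k] g) * x)
      = (g ⊗ₜ[k] (1 : H)) * LinearMap.lTensor H (HopfAlgebra.antipode k) x
        * ((1 : H) ⊗ₜ[k] HopfAlgebra.antipode k g) := by
    intro x
    induction x with
    | zero => simp
    | tmul a b => simp [HopfAlgebra.antipode_mul_antidistrib]
    | add a b ha hb => simp only [mul_add, map_add, add_mul, ha, hb]
  have hc : ∀ x : H, HopfAlgebra.antipode k g * (g * x) = x := fun x => by
    rw [← mul_assoc, hsg, one_mul]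
  refine ⟨by rw [Bialgebra.counit_mul, hg2, h1, one_mul], ?_, ?_, ?_, ?_⟩
  · rw [hD, hS]
    have := congrArg (fun z => (g ⊗ₜ[k] g) * z * ((1 : H) ⊗ₜ[k] HopfAlgebra.antipode k g)) h2
    simpa [mul_assoc] using this
  · rw [hD, hS, hR]
    have := congrArg (fun z => (g ⊗ₜ[k] g) * z * (HopfAlgebra.antipode k g ⊗ₜ[k] (1 : H))) h3
    have e : ((g * r) ⊗ₜ[k] (1 : H)) * ((1 : H) ⊗ₜ[k] g) = (g ⊗ₜ[k] g) * (r ⊗ₜ[k] (1 : H)) := by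
      simp
    rw [← mul_assoc, ← mul_assoc, e, mul_assoc (g ⊗ₜ[k] g)]
    simpa only [Algebra.TensorProduct.tmul_mul_tmul, mul_one, mul_assoc] using this
  · rw [hD, hS, hL]
    have := congrArg (fun z => (g ⊗ₜ[k] (1 : H)) * z) h4
    simpa [mul_assoc, hc] using this
  · rw [hD, hS]
    have := congrArg (fun z => ((1 : H) ⊗ₜ[k] g) * z) h5
    simp only [← mul_assoc, Algebra.TensorProduct.tmul_mul_tmul, one_mul, mul_one] at this ⊢
    simpa [mul_assoc, hc, hsg] using this
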